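/- Let (Ω, ℱ) be a measurable space and let φ: Ω × ℝ^d → 𝒟_0 be ℱ ⊗ ℬ(ℝ^d)/𝒟-measurable and such that φ(ω, ·): ℝ^d → (𝒟_0, ‖·‖_0) is continuous for every ω ∈ Ω. Then the function K: Ω × ℝ^d × ℝ^d → ℝ defined by K(ω, x, y) = ‖φ(ω,x) − φ(ω,y)‖_0 is jointly measurable with respect to ℱ ⊗ ℬ(ℝ^d) ⊗ ℬ(ℝ^d). -/

import Mathlib

open MeasureTheory Filter Set Topology

noncomputable section

/-- The time interval `[0, T]` as a type. -/
abbrev Icc0 (T : ℝ) : Type := ↥(Set.Icc (0 : ℝ) T)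

/-- A function on `[0, T]` is càdlàg if it is right-continuous and has left limits. -/
def IsCadlag {E : Type*} [TopologicalSpace E] {T : ℝ} (f : Icc0 T → E) : Prop :=
  (∀ t, Tendsto f (nhdsWithin t (Set.Ioi t)) (nhds (f t))) ∧
    (∀ t, ∃ L, Tendsto f (nhdsWithin t (Set.Iio t)) (nhds L))

/-- `𝒟₀`: the space of càdlàg functions from `[0, T]` to `ℝ^d`. -/
def D0 (T : ℝ) (d : ℕ) : Type :=
  {f : Icc0 T → EuclideanSpace ℝ (Fin d) // IsCadlag f}

/-- The uniform distance `‖x − y‖₀` on `𝒟₀`. -/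
noncomputable def unifDist {T : ℝ} {d : ℕ} (f g : D0 T d) : ℝ :=
  ⨆ t : Icc0 T, dist (f.1 t) (g.1 t)

/-- `𝒟`: the σ-algebra on `𝒟₀` generated by the evaluation maps. -/
def Dsigma (T : ℝ) (d : ℕ) : MeasurableSpace (D0 T d) :=
  ⨆ t : Icc0 T, MeasurableSpace.comap (fun f => f.1 t) inferInstance

/-- Continuity of a map `ℝ^d → (𝒟₀, ‖·‖₀)`. -/
def ContinuousInD0 {T : ℝ} {d : ℕ} (F : EuclideanSpace ℝ (Fin d) → D0 T d) : Prop :=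
  ∀ x, ∀ ε > (0 : ℝ), ∃ δ > (0 : ℝ), ∀ y, dist x y < δ → unifDist (F x) (F y) < ε

/-! The uniform distance is already `𝒟 ⊗ 𝒟`-measurable on `𝒟₀ × 𝒟₀`: for càdlàg `f` and `g` the
function `t ↦ |f(t) - g(t)|` is right-continuous, so its supremum over `[0, T]` is the supremum over
a countable dense set of times containing `T`, which nothing in the interval approximates from the
right. -/

theorem sSup_eq_of_subset_of_subset_closure {α : Type*} [ConditionallyCompleteLinearOrder α]
    [TopologicalSpace α] [ClosedIicTopology α] {s t : Set α} (hst : s ⊆ t)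
    (hts : t ⊆ closure s) : sSup s = sSup t := by
  rcases s.eq_empty_or_nonempty with rfl | hs
  · rw [closure_empty, subset_empty_iff] at hts
    rw [hts]
  by_cases hbdd : BddAbove s
  · have hlub : IsLUB t (sSup s) :=
      (isLUB_iff_of_subset_of_subset_closure hst hts).1 (isLUB_csSup hs hbdd)
    exact (hlub.csSup_eq (hs.mono hst)).symm
  · rw [csSup_of_not_bddAbove hbdd, csSup_of_not_bddAbove (mt (BddAbove.mono hst) hbdd)]

section RightContinuous

variable {ι : Type*} [LinearOrder ι] [TopologicalSpace ι] [OrderTopology ι] [DenselyOrdered ι]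

theorem mem_closure_Ioi_inter_of_dense {S : Set ι} (hS : Dense S) {t : ι}
    (ht : (Ioi t).Nonempty) : t ∈ closure (Ioi t ∩ S) := by
  have hmem : t ∈ closure (Ioi t) := closure_Ioi' ht ▸ self_mem_Ici
  exact closure_minimal (hS.open_subset_closure_inter isOpen_Ioi) isClosed_closure hmem

theorem range_subset_closure_image_of_rightContinuous {β : Type*} [TopologicalSpace β]
    {S : Set ι} (hS : Dense S) (hS_top : ∀ t, IsTop t → t ∈ S) {f : ι → β}
    (hf : ∀ t, ContinuousWithinAt f (Ioi t) t) : range f ⊆ closure (f '' S) := by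
  rintro _ ⟨t, rfl⟩
  by_cases ht : IsTop t
  · exact subset_closure (mem_image_of_mem f (hS_top t ht))
  · have hmem : t ∈ closure (Ioi t ∩ S) :=
      mem_closure_Ioi_inter_of_dense hS (by simpa [IsTop, Set.Nonempty] using ht)
    have himage : f t ∈ closure (f '' (Ioi t ∩ S)) :=
      ((hf t).mono inter_subset_left).mem_closure_image hmem
    exact closure_mono (image_mono inter_subset_right) himage

variable {β : Type*} [ConditionallyCompleteLinearOrder β] [TopologicalSpace β]

theorem iSup_dense_eq_iSup_of_rightContinuous [ClosedIicTopology β] {S : Set ι} (hS : Dense S)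
    (hS_top : ∀ t, IsTop t → t ∈ S) {f : ι → β} (hf : ∀ t, ContinuousWithinAt f (Ioi t) t) :
    ⨆ s : S, f s = ⨆ t, f t := by
  rw [← sSup_image', ← sSup_range]
  exact sSup_eq_of_subset_of_subset_closure (image_subset_range f S)
    (range_subset_closure_image_of_rightContinuous hS hS_top hf)

theorem measurable_iSup_of_rightContinuous [TopologicalSpace.SeparableSpace ι] [OrderTopology β]
    [SecondCountableTopology β] [MeasurableSpace β] [BorelSpace β] {α : Type*} [MeasurableSpace α]
    {f : α → ι → β} (hmeas : ∀ t, Measurable fun a => f a t)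
    (hf : ∀ a t, ContinuousWithinAt (f a) (Ioi t) t) : Measurable fun a => ⨆ t, f a t := by
  obtain ⟨S, hS_countable, hS_dense, -, hS_top⟩ := exists_countable_dense_bot_top ι
  have : Countable S := hS_countable.to_subtype
  simp_rw [← fun a => iSup_dense_eq_iSup_of_rightContinuous hS_dense hS_top (hf a)]
  exact Measurable.iSup fun s => hmeas s

end RightContinuous

section D0

variable {T : ℝ} {d : ℕ}

theorem measurable_eval_D0 (t : Icc0 T) : Measurable[Dsigma T d] fun f : D0 T d => f.1 t :=
  Measurable.of_comap_le <|
    le_iSup (fun t => MeasurableSpace.comap (fun f : D0 T d => f.1 t) inferInstance) t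

theorem measurable_unifDist {α : Type*} [MeasurableSpace α] {f g : α → D0 T d}
    (hf : Measurable[_, Dsigma T d] f) (hg : Measurable[_, Dsigma T d] g) :
    Measurable fun a => unifDist (f a) (g a) :=
  measurable_iSup_of_rightContinuous
    (fun t => ((measurable_eval_D0 t).comp hf).dist ((measurable_eval_D0 t).comp hg))
    (fun a t => ((f a).2.1 t).dist ((g a).2.1 t))

theorem jointly_measurable_unifDist_general {Ω X : Type*} [MeasurableSpace Ω] [MeasurableSpace X]
    {φ : Ω → X → D0 T d}
    (hφ : Measurable[_, Dsigma T d] fun q : Ω × X => φ q.1 q.2) :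
    Measurable fun q : Ω × X × X => unifDist (φ q.1 q.2.1) (φ q.1 q.2.2) :=
  measurable_unifDist (hφ.comp (measurable_fst.prodMk measurable_snd.fst))
    (hφ.comp (measurable_fst.prodMk measurable_snd.snd))

end D0

/-- **Joint measurability of `K(ω, x, y) = ‖φ(ω,x) − φ(ω,y)‖₀`.**
If `φ : Ω × ℝ^d → 𝒟₀` is `ℱ ⊗ ℬ(ℝ^d)/𝒟`-measurable and `φ(ω,·)` is continuous into
`(𝒟₀, ‖·‖₀)` for every `ω`, then `K` is `ℱ ⊗ ℬ(ℝ^d) ⊗ ℬ(ℝ^d)`-measurable. -/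
theorem jointly_measurable_unifDist
    {Ω : Type*} [MeasurableSpace Ω] (T : ℝ) (d : ℕ)
    (φ : Ω → EuclideanSpace ℝ (Fin d) → D0 T d)
    (hφmeas : @Measurable (Ω × EuclideanSpace ℝ (Fin d)) (D0 T d)
      inferInstance (Dsigma T d) (fun q => φ q.1 q.2))
    (hφcont : ∀ ω, ContinuousInD0 (φ ω)) :
    Measurable
      (fun q : Ω × EuclideanSpace ℝ (Fin d) × EuclideanSpace ℝ (Fin d) =>
        unifDist (φ q.1 q.2.1) (φ q.1 q.2.2)) :=
  jointly_measurable_unifDist_general hφmeas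

end
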